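/- Let f, g be holomorphic in the open strip α < Re(z) < β and continuous on its closure, and let b, c > 0. Suppose |f(z)|^b |g(z)|^c and |g(z)| tend to 0 as |Im(z)| → ∞, uniformly in the strip. Define I(η) = ∫_{-∞}^{∞} |f(η+it)|^b |g(η+it)|^c dt. Then for any γ ∈ [α, β], I(γ) ≤ I(α)^{(β-γ)/(β-α)} I(β)^{(γ-α)/(β-α)} (with the inequality interpreted appropriately if any integral diverges). -/

import Mathlib

/-!
The function `|f|^b |g|^c` is log-subharmonic: its logarithm `b log |f| + c log |g|` satisfies the
sub-mean-value inequality by Jensen's formula. By Radó's criterion, `v` is log-subharmonic exactly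
when every twist `|exp (a z)| v z` is subharmonic, and in this form the property visibly survives
averaging over translates. Hence the truncated integrals `∫ s in -N..N, v (z + s i)` are
log-subharmonic functions of `z`, and they are bounded in the strip when `v` is. A bounded
log-subharmonic function obeys the three lines theorem: a twist `|exp (l z)|` with `l` real
equalises the bounds on the two boundary lines, and the maximum principle applies. Letting `N → ∞`
gives the convexity inequality for the full line integrals.
-/

section

open Complex MeasureTheory Metric Set Filter Function Topology
open Real (circleAverage)

/-- Continuous subharmonic functions on `U`, given by the sub-mean-value inequality on the closed
discs contained in `U`. Continuity is part of the notion, so that the circle averages are never the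
junk value `0` of a non-integrable function. -/
structure SubharmonicOn (v : ℂ → ℝ) (U : Set ℂ) : Prop where
  continuousOn : ContinuousOn v U
  le_circleAverage : ∀ ⦃z : ℂ⦄ ⦃r : ℝ⦄, 0 < r → closedBall z r ⊆ U → v z ≤ circleAverage v z r

/-- Continuous nonnegative functions `v` such that `log v` is subharmonic. The encoding is Radó's
criterion, which avoids the value `-∞` of the logarithm at the zeros of `v`: every product of `v`
with the modulus of an exponential `exp (a z)` is subharmonic. -/
def LogSubharmonicOn (v : ℂ → ℝ) (U : Set ℂ) : Prop :=
  ∀ a : ℂ, SubharmonicOn (fun z ↦ ‖exp (a * z)‖ * v z) U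

theorem log_norm_le_circleAverage {f : ℂ → ℂ} {z : ℂ} {r : ℝ} (hr : 0 < r)
    (hf : AnalyticOnNhd ℂ f (closedBall z r)) (hfz : f z ≠ 0) :
    Real.log ‖f z‖ ≤ circleAverage (fun w ↦ Real.log ‖f w‖) z r := by
  rw [← abs_of_pos hr] at hf
  rw [hf.circleAverage_log_norm hr.ne' hfz, le_add_iff_nonneg_left]
  refine finsum_nonneg fun u ↦ ?_
  by_cases hu : u ∈ closedBall z |r|
  · refine mul_nonneg (mod_cast MeromorphicOn.AnalyticOnNhd.divisor_nonneg hf u) ?_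
    rcases eq_or_ne u z with rfl | huz
    · simp
    · rw [mem_closedBall, dist_eq_norm', abs_of_pos hr] at hu
      rw [← div_eq_mul_inv]
      exact Real.log_nonneg ((one_le_div (norm_sub_pos_iff.2 huz.symm)).2 hu)
  · simp [hu]

theorem exp_circleAverage_le {φ : ℂ → ℝ} {z : ℂ} {r : ℝ} (hφ : CircleIntegrable φ z r)
    (hexp : CircleIntegrable (fun w ↦ Real.exp (φ w)) z r) :
    Real.exp (circleAverage φ z r) ≤ circleAverage (fun w ↦ Real.exp (φ w)) z r := by
  simp only [Real.circleAverage_eq_intervalAverage]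
  refine convexOn_exp.map_set_average_le Real.continuous_exp.continuousOn isClosed_univ
    (by simp [uIoc_of_le Real.two_pi_pos.le, Real.pi_pos]) measure_Ioc_lt_top.ne (by simp)
    hφ.def' hexp.def'

theorem rpow_mul_rpow_eq_exp {x y : ℝ} (hx : 0 < x) (hy : 0 < y) (b c : ℝ) :
    x ^ b * y ^ c = Real.exp (b * Real.log x + c * Real.log y) := by
  rw [Real.rpow_def_of_pos hx, Real.rpow_def_of_pos hy, ← Real.exp_add, mul_comm b, mul_comm c]

theorem eventually_codiscreteWithin_sphere_ne_zero {E : Type*} [NormedAddCommGroup E]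
    [NormedSpace ℂ E] {f : ℂ → E} {z : ℂ} {r : ℝ} (hr : 0 < r)
    (hf : AnalyticOnNhd ℂ f (closedBall z r)) (hfz : f z ≠ 0) :
    ∀ᶠ w in codiscreteWithin (sphere z |r|), f w ≠ 0 := by
  have hz : z ∈ closedBall z r := mem_closedBall_self hr.le
  rw [abs_of_pos hr]
  exact codiscreteWithin_mono sphere_subset_closedBall
    (hf.preimage_zero_mem_codiscreteWithin hfz hz
      ⟨⟨z, hz⟩, (convex_closedBall z r).isPreconnected⟩)

theorem circleAverage_const_mul (k : ℝ) (φ : ℂ → ℝ) (z : ℂ) (r : ℝ) :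
    circleAverage (fun w ↦ k * φ w) z r = k * circleAverage φ z r :=
  Real.circleAverage_fun_smul (a := k) (f := φ)

theorem circleAverage_add_mul {φ ψ : ℂ → ℝ} {z : ℂ} {r : ℝ} (hφ : CircleIntegrable φ z r)
    (hψ : CircleIntegrable ψ z r) (b c : ℝ) :
    circleAverage (fun w ↦ b * φ w + c * ψ w) z r =
      b * circleAverage φ z r + c * circleAverage ψ z r := by
  have hb : CircleIntegrable (fun w ↦ b * φ w) z r := hφ.const_mul b
  have hc : CircleIntegrable (fun w ↦ c * ψ w) z r := hψ.const_mul c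
  rw [Real.circleAverage_fun_add hb hc, circleAverage_const_mul, circleAverage_const_mul]

theorem continuousOn_norm_rpow_mul_norm_rpow {X E F : Type*} [TopologicalSpace X]
    [SeminormedAddCommGroup E] [SeminormedAddCommGroup F] {f : X → E} {g : X → F} {U : Set X}
    {b c : ℝ} (hb : 0 ≤ b) (hc : 0 ≤ c) (hf : ContinuousOn f U) (hg : ContinuousOn g U) :
    ContinuousOn (fun x ↦ ‖f x‖ ^ b * ‖g x‖ ^ c) U :=
  (hf.norm.rpow_const fun _ _ ↦ Or.inr hb).mul (hg.norm.rpow_const fun _ _ ↦ Or.inr hc)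

theorem norm_rpow_mul_norm_rpow_le_circleAverage_of_ne_zero {f g : ℂ → ℂ} {z : ℂ} {r b c : ℝ}
    (hr : 0 < r) (hb : 0 ≤ b) (hc : 0 ≤ c) (hf : AnalyticOnNhd ℂ f (closedBall z r))
    (hg : AnalyticOnNhd ℂ g (closedBall z r)) (hfz : f z ≠ 0) (hgz : g z ≠ 0) :
    ‖f z‖ ^ b * ‖g z‖ ^ c ≤ circleAverage (fun w ↦ ‖f w‖ ^ b * ‖g w‖ ^ c) z r := by
  have hsphere : sphere z |r| ⊆ closedBall z r := by
    simpa only [abs_of_pos hr] using sphere_subset_closedBall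
  have hlogf : CircleIntegrable (fun w ↦ Real.log ‖f w‖) z r :=
    (hf.mono hsphere).meromorphicOn.circleIntegrable_log_norm
  have hlogg : CircleIntegrable (fun w ↦ Real.log ‖g w‖) z r :=
    (hg.mono hsphere).meromorphicOn.circleIntegrable_log_norm
  set φ : ℂ → ℝ := fun w ↦ b * Real.log ‖f w‖ + c * Real.log ‖g w‖ with hφ_def
  have hφ : CircleIntegrable φ z r := (hlogf.const_mul b).add (hlogg.const_mul c)
  have heq : (fun w ↦ ‖f w‖ ^ b * ‖g w‖ ^ c) =ᶠ[codiscreteWithin (sphere z |r|)]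
      fun w ↦ Real.exp (φ w) := by
    filter_upwards [eventually_codiscreteWithin_sphere_ne_zero hr hf hfz,
      eventually_codiscreteWithin_sphere_ne_zero hr hg hgz] with w hfw hgw
    exact rpow_mul_rpow_eq_exp (norm_pos_iff.2 hfw) (norm_pos_iff.2 hgw) b c
  have hint : CircleIntegrable (fun w ↦ ‖f w‖ ^ b * ‖g w‖ ^ c) z r :=
    ((continuousOn_norm_rpow_mul_norm_rpow hb hc hf.continuousOn hg.continuousOn).mono
      sphere_subset_closedBall).circleIntegrable hr.le
  calc ‖f z‖ ^ b * ‖g z‖ ^ c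
      = Real.exp (φ z) := rpow_mul_rpow_eq_exp (norm_pos_iff.2 hfz) (norm_pos_iff.2 hgz) b c
    _ ≤ Real.exp (circleAverage φ z r) := by
        rw [hφ_def, circleAverage_add_mul hlogf hlogg]
        dsimp only
        gcongr
        exacts [log_norm_le_circleAverage hr hf hfz, log_norm_le_circleAverage hr hg hgz]
    _ ≤ circleAverage (fun w ↦ Real.exp (φ w)) z r :=
        exp_circleAverage_le hφ (hint.congr_codiscreteWithin heq)
    _ = circleAverage (fun w ↦ ‖f w‖ ^ b * ‖g w‖ ^ c) z r :=
        (Real.circleAverage_congr_codiscreteWithin heq hr.ne').symm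

theorem norm_rpow_mul_norm_rpow_le_circleAverage {f g : ℂ → ℂ} {z : ℂ} {r b c : ℝ} (hr : 0 < r)
    (hb : 0 < b) (hc : 0 < c) (hf : AnalyticOnNhd ℂ f (closedBall z r))
    (hg : AnalyticOnNhd ℂ g (closedBall z r)) :
    ‖f z‖ ^ b * ‖g z‖ ^ c ≤ circleAverage (fun w ↦ ‖f w‖ ^ b * ‖g w‖ ^ c) z r := by
  have havg_nonneg : 0 ≤ circleAverage (fun w ↦ ‖f w‖ ^ b * ‖g w‖ ^ c) z r :=
    Real.circleAverage_nonneg_of_nonneg fun _ _ ↦ by positivity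
  by_cases hfz : f z = 0
  · simpa [hfz, Real.zero_rpow hb.ne'] using havg_nonneg
  by_cases hgz : g z = 0
  · simpa [hgz, Real.zero_rpow hc.ne'] using havg_nonneg
  exact norm_rpow_mul_norm_rpow_le_circleAverage_of_ne_zero hr hb.le hc.le hf hg hfz hgz

theorem subharmonicOn_norm_rpow_mul_norm_rpow {f g : ℂ → ℂ} {U : Set ℂ} {b c : ℝ}
    (hb : 0 < b) (hc : 0 < c) (hf : AnalyticOnNhd ℂ f U) (hg : AnalyticOnNhd ℂ g U) :
    SubharmonicOn (fun z ↦ ‖f z‖ ^ b * ‖g z‖ ^ c) U where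
  continuousOn := continuousOn_norm_rpow_mul_norm_rpow hb.le hc.le hf.continuousOn hg.continuousOn
  le_circleAverage _ _ hr hU :=
    norm_rpow_mul_norm_rpow_le_circleAverage hr hb hc (hf.mono hU) (hg.mono hU)

theorem logSubharmonicOn_norm_rpow_mul_norm_rpow {f g : ℂ → ℂ} {U : Set ℂ} {b c : ℝ}
    (hb : 0 < b) (hc : 0 < c) (hf : AnalyticOnNhd ℂ f U) (hg : AnalyticOnNhd ℂ g U) :
    LogSubharmonicOn (fun z ↦ ‖f z‖ ^ b * ‖g z‖ ^ c) U := by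
  intro a
  have hexp (z : ℂ) : ‖exp (a * z)‖ = ‖exp (a / b * z)‖ ^ b := by
    rw [norm_exp, norm_exp, ← Real.exp_mul, div_mul_eq_mul_div, div_ofReal_re,
      div_mul_cancel₀ _ hb.ne']
  have htwist : AnalyticOnNhd ℂ (fun z ↦ exp (a / b * z) * f z) U :=
    fun z hz ↦ (by fun_prop : AnalyticAt ℂ (fun z ↦ exp (a / b * z)) z).mul (hf z hz)
  convert! subharmonicOn_norm_rpow_mul_norm_rpow hb hc htwist hg using 2 with z
  rw [norm_mul, Real.mul_rpow (norm_nonneg _) (norm_nonneg _), ← hexp, mul_assoc]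

theorem continuousOn_intervalIntegral {X E : Type*} [TopologicalSpace X] [NormedAddCommGroup E]
    [NormedSpace ℝ E] {F : X → ℝ → E} {U : Set X} (hF : ContinuousOn (uncurry F) (U ×ˢ univ))
    (a b : ℝ) : ContinuousOn (fun x ↦ ∫ s in a..b, F x s) U := by
  rw [continuousOn_iff_continuous_domRestrict]
  have hsubtype : Continuous (uncurry fun (x : U) s ↦ F x s) :=
    hF.comp_continuous (f := fun p : U × ℝ ↦ ((p.1 : X), p.2)) (by fun_prop) (by simp)
  exact intervalIntegral.continuous_parametric_intervalIntegral_of_continuous' hsubtype a b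

theorem continuous_circleMap_slice {X Y : Type*} [TopologicalSpace X] [TopologicalSpace Y]
    {F : ℂ → X → Y} {U : Set ℂ} {z : ℂ} {r : ℝ} (hF : ContinuousOn (uncurry F) (U ×ˢ univ))
    (hU : sphere z |r| ⊆ U) : Continuous fun p : ℝ × X ↦ F (circleMap z r p.1) p.2 :=
  hF.comp_continuous (f := fun p : ℝ × X ↦ (circleMap z r p.1, p.2)) (by fun_prop)
    fun p ↦ ⟨hU (circleMap_mem_sphere' z r p.1), mem_univ _⟩

theorem circleAverage_intervalIntegral {E : Type*} [NormedAddCommGroup E] [NormedSpace ℝ E]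
    {F : ℂ → ℝ → E} {z : ℂ} {r : ℝ}
    (hF : Continuous fun p : ℝ × ℝ ↦ F (circleMap z r p.1) p.2) (a b : ℝ) :
    circleAverage (fun w ↦ ∫ s in a..b, F w s) z r =
      ∫ s in a..b, circleAverage (fun w ↦ F w s) z r := by
  simp only [Real.circleAverage_def]
  rw [intervalIntegral.integral_smul, intervalIntegral_intervalIntegral_swap]
  exact (hF.continuousOn.integrableOn_compact (isCompact_uIcc.prod isCompact_uIcc)).mono_set
    (prod_mono uIoc_subset_uIcc uIoc_subset_uIcc)

namespace SubharmonicOn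

variable {v : ℂ → ℝ} {U : Set ℂ}

theorem const_mul (hv : SubharmonicOn v U) {k : ℝ} (hk : 0 ≤ k) :
    SubharmonicOn (fun z ↦ k * v z) U where
  continuousOn := hv.continuousOn.const_mul k
  le_circleAverage _ _ hr hU := by
    rw [circleAverage_const_mul]
    exact mul_le_mul_of_nonneg_left (hv.le_circleAverage hr hU) hk

theorem comp_add_const (hv : SubharmonicOn v U) {V : Set ℂ} {w : ℂ}
    (hVU : MapsTo (· + w) V U) : SubharmonicOn (fun z ↦ v (z + w)) V where
  continuousOn := hv.continuousOn.comp (by fun_prop) hVU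
  le_circleAverage z r hr hV := by
    have hball : closedBall (z + w) r ⊆ U := fun y hy ↦ by
      simpa using hVU (hV (a := y - w) (by simpa [dist_eq_norm, sub_sub, add_comm] using hy))
    refine (hv.le_circleAverage hr hball).trans_eq ?_
    rw [← Real.circleAverage_map_add_const, ← Real.circleAverage_map_add_const (c := z)]
    simp only [add_assoc]

theorem intervalIntegral {F : ℂ → ℝ → ℝ} {a b : ℝ} (hab : a ≤ b)
    (hF : ContinuousOn (uncurry F) (U ×ˢ univ))
    (hsub : ∀ s ∈ Icc a b, SubharmonicOn (fun z ↦ F z s) U) :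
    SubharmonicOn (fun z ↦ ∫ s in a..b, F z s) U where
  continuousOn := continuousOn_intervalIntegral hF a b
  le_circleAverage z r hr hU := by
    have hsphere : sphere z |r| ⊆ U := by
      rw [abs_of_pos hr]
      exact sphere_subset_closedBall.trans hU
    have hcircle := continuous_circleMap_slice hF hsphere
    have hcenter : Continuous fun s ↦ F z s :=
      hF.comp_continuous (f := fun s ↦ (z, s)) (by fun_prop)
        fun s ↦ ⟨hU (mem_closedBall_self hr.le), mem_univ s⟩
    have havg : Continuous fun s ↦ circleAverage (fun w ↦ F w s) z r :=
      (intervalIntegral.continuous_parametric_intervalIntegral_of_continuous'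
        (f := fun s θ ↦ F (circleMap z r θ) s) (μ := volume) (hcircle.comp continuous_swap)
        0 (2 * Real.pi)).const_smul (2 * Real.pi)⁻¹
    rw [circleAverage_intervalIntegral hcircle]
    exact intervalIntegral.integral_mono_on hab (hcenter.intervalIntegrable _ _)
      (havg.intervalIntegrable _ _) fun s hs ↦ (hsub s hs).le_circleAverage hr hU

end SubharmonicOn

namespace LogSubharmonicOn

variable {v : ℂ → ℝ} {U : Set ℂ}

theorem comp_add_const (hv : LogSubharmonicOn v U) {V : Set ℂ} {w : ℂ}
    (hVU : MapsTo (· + w) V U) : LogSubharmonicOn (fun z ↦ v (z + w)) V := by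
  intro a
  convert! ((hv a).comp_add_const hVU).const_mul (norm_nonneg (exp (-(a * w)))) using 2 with z
  rw [← mul_assoc, ← norm_mul, ← exp_add]
  ring_nf

theorem intervalIntegral {F : ℂ → ℝ → ℝ} {a b : ℝ} (hab : a ≤ b)
    (hF : ContinuousOn (uncurry F) (U ×ˢ univ))
    (hsub : ∀ s ∈ Icc a b, LogSubharmonicOn (fun z ↦ F z s) U) :
    LogSubharmonicOn (fun z ↦ ∫ s in a..b, F z s) U := by
  intro k
  simp only [← intervalIntegral.integral_const_mul]
  refine SubharmonicOn.intervalIntegral hab ?_ fun s hs ↦ hsub s hs k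
  exact ContinuousOn.mul (by fun_prop) hF

end LogSubharmonicOn

/-- A comparison function for the maximum principle in the strip `α ≤ re z ≤ β`: it is nonnegative
there, tends to `∞` with `|im z|`, and is strictly superharmonic, its Laplacian being `2 - 4`. -/
def stripBarrier (α β : ℝ) (z : ℂ) : ℝ := z.im ^ 2 + 2 * ((z.re - α) * (β - z.re))

theorem continuous_stripBarrier (α β : ℝ) : Continuous (stripBarrier α β) := by
  unfold stripBarrier
  fun_prop

theorem sq_im_le_stripBarrier {α β : ℝ} {z : ℂ} (hz : z.re ∈ Icc α β) :
    z.im ^ 2 ≤ stripBarrier α β z := by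
  have := mul_nonneg (sub_nonneg.2 hz.1) (sub_nonneg.2 hz.2)
  unfold stripBarrier
  linarith

theorem circleAverage_stripBarrier (α β : ℝ) (z : ℂ) (r : ℝ) :
    circleAverage (stripBarrier α β) z r = stripBarrier α β z - r ^ 2 / 2 := by
  have hexpand (θ : ℝ) : stripBarrier α β (circleMap z r θ) = stripBarrier α β z +
      2 * r * z.im * Real.sin θ + 2 * r * (α + β - 2 * z.re) * Real.cos θ +
      r ^ 2 * Real.sin θ ^ 2 - 2 * r ^ 2 * Real.cos θ ^ 2 := by
    have hre : (circleMap z r θ).re = z.re + r * Real.cos θ := by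
      simp [circleMap, exp_ofReal_mul_I_re]
    have him : (circleMap z r θ).im = z.im + r * Real.sin θ := by
      simp [circleMap, exp_ofReal_mul_I_im]
    rw [stripBarrier, hre, him, stripBarrier]
    ring
  have hint {f : ℝ → ℝ} (hf : Continuous f) : IntervalIntegrable f volume 0 (2 * Real.pi) :=
    hf.intervalIntegrable _ _
  simp only [Real.circleAverage_def, hexpand]
  rw [intervalIntegral.integral_sub (hint (by fun_prop)) (hint (by fun_prop)),
    intervalIntegral.integral_add (hint (by fun_prop)) (hint (by fun_prop)),
    intervalIntegral.integral_add (hint (by fun_prop)) (hint (by fun_prop)),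
    intervalIntegral.integral_add (hint (by fun_prop)) (hint (by fun_prop))]
  simp only [intervalIntegral.integral_const_mul, intervalIntegral.integral_const, integral_sin,
    integral_cos, integral_sin_sq, integral_cos_sq, Real.sin_two_pi, Real.cos_two_pi,
    Real.sin_zero, Real.cos_zero, smul_eq_mul]
  field_simp
  ring

theorem exists_isMaxOn_sub_stripBarrier {u : ℂ → ℝ} {α β δ : ℝ} (hab : α ≤ β) (hδ : 0 < δ)
    (hcont : ContinuousOn u (re ⁻¹' Icc α β)) (hbdd : BddAbove (u '' (re ⁻¹' Icc α β))) :
    ∃ y ∈ re ⁻¹' Icc α β, IsMaxOn (fun z ↦ u z - δ * stripBarrier α β z) (re ⁻¹' Icc α β) y := by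
  obtain ⟨M, hM⟩ := hbdd
  set w : ℂ → ℝ := fun z ↦ u z - δ * stripBarrier α β z
  obtain ⟨R, hR⟩ : ∃ R : ℝ, ∀ t, R ≤ |t| → M - δ * t ^ 2 ≤ w α := by
    refine ⟨1 + |M - w α| / δ, fun t ht ↦ ?_⟩
    have hquot : 0 ≤ |M - w α| / δ := by positivity
    have hsq : |M - w α| / δ ≤ t ^ 2 := by
      rw [← sq_abs]
      nlinarith
    have := le_abs_self (M - w α)
    rw [div_le_iff₀ hδ] at hsq
    linarith
  have hα : (α : ℂ) ∈ re ⁻¹' Icc α β := by simpa using hab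
  refine ContinuousOn.exists_isMaxOn' (hcont.sub
    ((continuous_stripBarrier α β).const_mul δ).continuousOn)
    (isClosed_Icc.preimage continuous_re) hα ?_
  have hbox : IsCompact (Icc α β ×ℂ Icc (-R) R) := isCompact_Icc.reProdIm isCompact_Icc
  filter_upwards [inter_mem_inf hbox.compl_mem_cocompact (mem_principal_self _)]
    with z ⟨hzbox, hz⟩
  have him : R ≤ |z.im| := by
    by_contra! hlt
    exact hzbox ⟨hz, abs_le.1 hlt.le⟩
  have hbarrier := mul_le_mul_of_nonneg_left (sq_im_le_stripBarrier hz) hδ.le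
  exact (sub_le_sub (hM (mem_image_of_mem u hz)) hbarrier).trans (hR _ him)

namespace SubharmonicOn

theorem not_isMaxOn_sub_stripBarrier {u : ℂ → ℝ} {α β δ : ℝ} {y : ℂ} (hδ : 0 < δ)
    (hu : SubharmonicOn u (re ⁻¹' Ioo α β)) (hy : y ∈ re ⁻¹' Ioo α β) :
    ¬ IsMaxOn (fun z ↦ u z - δ * stripBarrier α β z) (re ⁻¹' Ioo α β) y := by
  intro hmax
  obtain ⟨r, hr, hball⟩ := nhds_basis_closedBall.mem_iff.1
    ((isOpen_Ioo.preimage continuous_re).mem_nhds hy)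
  have hsphere : sphere y |r| ⊆ re ⁻¹' Ioo α β := by
    rw [abs_of_pos hr]
    exact sphere_subset_closedBall.trans hball
  have hu_int : CircleIntegrable u y r :=
    (hu.continuousOn.mono (by rwa [abs_of_pos hr] at hsphere)).circleIntegrable hr.le
  have hq_int : CircleIntegrable (fun z ↦ δ * stripBarrier α β z) y r :=
    ((continuous_stripBarrier α β).const_mul δ).continuousOn.circleIntegrable hr.le
  have havg : circleAverage (fun z ↦ u z - δ * stripBarrier α β z) y r ≤
      u y - δ * stripBarrier α β y :=
    Real.circleAverage_mono_on_of_le_circle (hu_int.sub hq_int) fun w hw ↦ hmax (hsphere hw)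
  rw [Real.circleAverage_fun_sub hu_int hq_int, circleAverage_const_mul,
    circleAverage_stripBarrier] at havg
  have := hu.le_circleAverage hr hball
  have : 0 < δ * (r ^ 2 / 2) := by positivity
  linarith

theorem le_of_le_on_boundary {u : ℂ → ℝ} {α β K : ℝ} (hu : SubharmonicOn u (re ⁻¹' Ioo α β))
    (hcont : ContinuousOn u (re ⁻¹' Icc α β)) (hbdd : BddAbove (u '' (re ⁻¹' Icc α β)))
    (hα : ∀ z : ℂ, z.re = α → u z ≤ K) (hβ : ∀ z : ℂ, z.re = β → u z ≤ K)
    {z : ℂ} (hz : z.re ∈ Icc α β) : u z ≤ K := by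
  have hperturbed {δ : ℝ} (hδ : 0 < δ) : u z ≤ K + δ * stripBarrier α β z := by
    obtain ⟨y, hy, hmax⟩ := exists_isMaxOn_sub_stripBarrier (hz.1.trans hz.2) hδ hcont hbdd
    have hyK : u y ≤ K := by
      rcases eq_endpoints_or_mem_Ioo_of_mem_Icc hy with h | h | h
      · exact hα y h
      · exact hβ y h
      · exact absurd (hmax.on_subset (preimage_mono Ioo_subset_Icc_self))
          (hu.not_isMaxOn_sub_stripBarrier hδ h)
    have hq : 0 ≤ δ * stripBarrier α β y :=
      mul_nonneg hδ.le ((sq_nonneg _).trans (sq_im_le_stripBarrier hy))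
    have hzy : u z - δ * stripBarrier α β z ≤ u y - δ * stripBarrier α β y := hmax hz
    linarith
  have hlim : Tendsto (fun δ ↦ K + δ * stripBarrier α β z) (𝓝[>] 0) (𝓝 K) := by
    have : Continuous fun δ ↦ K + δ * stripBarrier α β z := by fun_prop
    simpa using (this.tendsto 0).mono_left nhdsWithin_le_nhds
  exact ge_of_tendsto hlim (eventually_mem_nhdsWithin.mono fun _ hδ ↦ hperturbed hδ)

end SubharmonicOn

theorem exists_rpow_mul_rpow_eq_exp_affine {α β A B : ℝ} (hab : α ≠ β) (hA : 0 < A)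
    (hB : 0 < B) : ∃ k l : ℝ, A = Real.exp (k - l * α) ∧ B = Real.exp (k - l * β) ∧
      ∀ x, A ^ ((β - x) / (β - α)) * B ^ ((x - α) / (β - α)) = Real.exp (k - l * x) := by
  have hd : β - α ≠ 0 := sub_ne_zero.2 hab.symm
  set l : ℝ := (Real.log A - Real.log B) / (β - α) with hl
  have hlogB : Real.log B = Real.log A + l * α - l * β := by
    rw [hl]
    field_simp
    ring
  refine ⟨Real.log A + l * α, l, ?_, ?_, fun x ↦ ?_⟩
  · rw [add_sub_cancel_right, Real.exp_log hA]
  · rw [← hlogB, Real.exp_log hB]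
  · rw [rpow_mul_rpow_eq_exp hA hB, hlogB]
    congr 1
    field_simp
    ring

theorem bddAbove_image_norm_exp_mul {v : ℂ → ℝ} {α β : ℝ}
    (hbdd : BddAbove (v '' (re ⁻¹' Icc α β))) (l : ℝ) :
    BddAbove ((fun z ↦ ‖exp (l * z)‖ * v z) '' (re ⁻¹' Icc α β)) := by
  obtain ⟨M, hM⟩ := hbdd
  obtain ⟨C, hC⟩ := (isCompact_Icc (a := α) (b := β)).bddAbove_image
    (f := fun x ↦ Real.exp (l * x)) (by fun_prop)
  refine ⟨C * |M|, forall_mem_image.2 fun z hz ↦ ?_⟩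
  rw [norm_exp, re_ofReal_mul]
  exact mul_le_mul_of_nonneg (hC (mem_image_of_mem _ hz))
    ((hM (mem_image_of_mem v hz)).trans (le_abs_self M)) (Real.exp_pos _).le (abs_nonneg M)

namespace LogSubharmonicOn

variable {v : ℂ → ℝ} {α β : ℝ}

theorem le_exp_of_le_exp_on_boundary (hv : LogSubharmonicOn v (re ⁻¹' Ioo α β))
    (hcont : ContinuousOn v (re ⁻¹' Icc α β)) (hbdd : BddAbove (v '' (re ⁻¹' Icc α β)))
    {k l : ℝ} (hα : ∀ z : ℂ, z.re = α → v z ≤ Real.exp (k - l * z.re))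
    (hβ : ∀ z : ℂ, z.re = β → v z ≤ Real.exp (k - l * z.re)) {z : ℂ} (hz : z.re ∈ Icc α β) :
    v z ≤ Real.exp (k - l * z.re) := by
  have htwist (w : ℂ) : v w ≤ Real.exp (k - l * w.re) ↔ ‖exp (l * w)‖ * v w ≤ Real.exp k := by
    rw [norm_exp, re_ofReal_mul, Real.exp_sub, le_div_iff₀' (Real.exp_pos _)]
  simp only [htwist] at hα hβ ⊢
  exact (hv l).le_of_le_on_boundary (ContinuousOn.mul (by fun_prop) hcont)
    (bddAbove_image_norm_exp_mul hbdd l) hα hβ hz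

theorem le_rpow_mul_rpow_of_pos (hab : α < β) (hv : LogSubharmonicOn v (re ⁻¹' Ioo α β))
    (hcont : ContinuousOn v (re ⁻¹' Icc α β)) (hbdd : BddAbove (v '' (re ⁻¹' Icc α β)))
    {A B : ℝ} (hA : 0 < A) (hB : 0 < B) (hvA : ∀ z : ℂ, z.re = α → v z ≤ A)
    (hvB : ∀ z : ℂ, z.re = β → v z ≤ B) {z : ℂ} (hz : z.re ∈ Icc α β) :
    v z ≤ A ^ ((β - z.re) / (β - α)) * B ^ ((z.re - α) / (β - α)) := by
  obtain ⟨k, l, rfl, rfl, hinterp⟩ := exists_rpow_mul_rpow_eq_exp_affine hab.ne hA hB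
  rw [hinterp]
  exact hv.le_exp_of_le_exp_on_boundary hcont hbdd (fun w hw ↦ by rw [hw]; exact hvA w hw)
    (fun w hw ↦ by rw [hw]; exact hvB w hw) hz

theorem le_rpow_mul_rpow (hab : α < β) (hv : LogSubharmonicOn v (re ⁻¹' Ioo α β))
    (hcont : ContinuousOn v (re ⁻¹' Icc α β)) (hbdd : BddAbove (v '' (re ⁻¹' Icc α β)))
    {A B : ℝ} (hA : 0 ≤ A) (hB : 0 ≤ B) (hvA : ∀ z : ℂ, z.re = α → v z ≤ A)
    (hvB : ∀ z : ℂ, z.re = β → v z ≤ B) {z : ℂ} (hz : z.re ∈ Icc α β) :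
    v z ≤ A ^ ((β - z.re) / (β - α)) * B ^ ((z.re - α) / (β - α)) := by
  have hp : 0 ≤ (β - z.re) / (β - α) := div_nonneg (sub_nonneg.2 hz.2) (sub_pos.2 hab).le
  have hq : 0 ≤ (z.re - α) / (β - α) := div_nonneg (sub_nonneg.2 hz.1) (sub_pos.2 hab).le
  have hlim : Tendsto
      (fun ε ↦ (A + ε) ^ ((β - z.re) / (β - α)) * (B + ε) ^ ((z.re - α) / (β - α)))
      (𝓝[>] 0) (𝓝 (A ^ ((β - z.re) / (β - α)) * B ^ ((z.re - α) / (β - α)))) := by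
    have hc : Continuous fun ε ↦
        (A + ε) ^ ((β - z.re) / (β - α)) * (B + ε) ^ ((z.re - α) / (β - α)) :=
      ((continuous_const_add A).rpow_const fun _ ↦ Or.inr hp).mul
        ((continuous_const_add B).rpow_const fun _ ↦ Or.inr hq)
    simpa using (hc.tendsto 0).mono_left nhdsWithin_le_nhds
  refine ge_of_tendsto hlim (eventually_mem_nhdsWithin.mono fun ε (hε : 0 < ε) ↦ ?_)
  exact hv.le_rpow_mul_rpow_of_pos hab hcont hbdd (by positivity) (by positivity)
    (fun w hw ↦ (hvA w hw).trans (by linarith)) (fun w hw ↦ (hvB w hw).trans (by linarith)) hz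

theorem ofReal_le_rpow_mul_rpow (hab : α < β) (hv : LogSubharmonicOn v (re ⁻¹' Ioo α β))
    (hcont : ContinuousOn v (re ⁻¹' Icc α β)) (hbdd : BddAbove (v '' (re ⁻¹' Icc α β)))
    {A B : ENNReal} (hvA : ∀ z : ℂ, z.re = α → ENNReal.ofReal (v z) ≤ A)
    (hvB : ∀ z : ℂ, z.re = β → ENNReal.ofReal (v z) ≤ B) {z : ℂ} (hz : z.re ∈ Icc α β) :
    ENNReal.ofReal (v z) ≤ A ^ ((β - z.re) / (β - α)) * B ^ ((z.re - α) / (β - α)) := by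
  obtain ⟨M, hM⟩ := hbdd
  have hp : 0 ≤ (β - z.re) / (β - α) := div_nonneg (sub_nonneg.2 hz.2) (sub_pos.2 hab).le
  have hq : 0 ≤ (z.re - α) / (β - α) := div_nonneg (sub_nonneg.2 hz.1) (sub_pos.2 hab).le
  -- `A` and `B` may be `∞`; truncating them at an upper bound of `v` keeps the hypotheses true.
  have htruncate {w : ℂ} {D : ENNReal} (hw : w.re ∈ Icc α β) (hD : ENNReal.ofReal (v w) ≤ D) :
      v w ≤ (min D (ENNReal.ofReal M)).toReal := by
    rw [← ENNReal.ofReal_le_iff_le_toReal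
      (ne_top_of_le_ne_top ENNReal.ofReal_ne_top (min_le_right _ _))]
    exact le_min hD (ENNReal.ofReal_le_ofReal (hM (mem_image_of_mem v hw)))
  have hreal := hv.le_rpow_mul_rpow hab hcont ⟨M, hM⟩ ENNReal.toReal_nonneg ENNReal.toReal_nonneg
    (fun w hw ↦ htruncate (by simp [hw, hab.le]) (hvA w hw))
    (fun w hw ↦ htruncate (by simp [hw, hab.le]) (hvB w hw)) hz
  refine (ENNReal.ofReal_le_ofReal hreal).trans ?_
  rw [ENNReal.ofReal_mul (by positivity), ← ENNReal.ofReal_rpow_of_nonneg ENNReal.toReal_nonneg hp,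
    ← ENNReal.ofReal_rpow_of_nonneg ENNReal.toReal_nonneg hq]
  gcongr <;> exact ENNReal.ofReal_toReal_le.trans (min_le_left _ _)

end LogSubharmonicOn

/-- The integral of `v` over the vertical segment of half-length `N` centred at `z`. It is a
function of `z ∈ ℂ`, not only of `re z`, in order to inherit the log-subharmonicity of `v`. -/
noncomputable def verticalWindow (v : ℂ → ℝ) (N : ℝ) (z : ℂ) : ℝ :=
  ∫ s in (-N)..N, v (z + s * I)

section

variable {v : ℂ → ℝ} {J : Set ℝ}

theorem continuousOn_uncurry_vertical_translate (hv : ContinuousOn v (re ⁻¹' J)) :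
    ContinuousOn (uncurry fun (z : ℂ) (s : ℝ) ↦ v (z + s * I)) ((re ⁻¹' J) ×ˢ univ) := by
  refine hv.comp (f := fun p : ℂ × ℝ ↦ p.1 + p.2 * I) (by fun_prop) fun p hp ↦ ?_
  simpa using hp.1

theorem continuous_vertical_line (hv : ContinuousOn v (re ⁻¹' J)) {z : ℂ} (hz : z.re ∈ J) :
    Continuous fun s : ℝ ↦ v (z + s * I) :=
  hv.comp_continuous (by fun_prop) fun s ↦ by simpa using hz

theorem continuousOn_verticalWindow (hv : ContinuousOn v (re ⁻¹' J)) (N : ℝ) :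
    ContinuousOn (verticalWindow v N) (re ⁻¹' J) :=
  continuousOn_intervalIntegral (continuousOn_uncurry_vertical_translate hv) (-N) N

theorem logSubharmonicOn_verticalWindow (hv : LogSubharmonicOn v (re ⁻¹' J))
    {N : ℝ} (hN : 0 ≤ N) : LogSubharmonicOn (verticalWindow v N) (re ⁻¹' J) :=
  .intervalIntegral (neg_le_self hN)
    (continuousOn_uncurry_vertical_translate (by simpa using (hv 0).continuousOn))
    fun s _ ↦ hv.comp_add_const fun z hz ↦ by simpa using hz

theorem bddAbove_image_verticalWindow (hcont : ContinuousOn v (re ⁻¹' J))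
    (hbdd : BddAbove (v '' (re ⁻¹' J))) {N : ℝ} (hN : 0 ≤ N) :
    BddAbove (verticalWindow v N '' (re ⁻¹' J)) := by
  obtain ⟨M, hM⟩ := hbdd
  refine ⟨∫ _ in (-N)..N, M, forall_mem_image.2 fun z hz ↦ ?_⟩
  exact intervalIntegral.integral_mono_on (neg_le_self hN)
    ((continuous_vertical_line hcont hz).intervalIntegrable _ _) intervalIntegrable_const
    fun s _ ↦ hM (mem_image_of_mem v (by simpa using hz))

theorem ofReal_verticalWindow {z : ℂ} (hcont : Continuous fun s : ℝ ↦ v (z + s * I))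
    (hv0 : ∀ s : ℝ, 0 ≤ v (z + s * I)) {N : ℝ} (hN : 0 ≤ N) :
    ENNReal.ofReal (verticalWindow v N z) =
      ∫⁻ s in Ioc (-N) N, ENNReal.ofReal (v (z + s * I)) := by
  rw [verticalWindow, intervalIntegral.integral_of_le (neg_le_self hN),
    ofReal_integral_eq_lintegral_ofReal (hcont.intervalIntegrable _ _).1 (.of_forall hv0)]

theorem ofReal_verticalWindow_le_lintegral {z : ℂ} (hcont : Continuous fun s : ℝ ↦ v (z + s * I))
    (hv0 : ∀ s : ℝ, 0 ≤ v (z + s * I)) {N : ℝ} (hN : 0 ≤ N) :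
    ENNReal.ofReal (verticalWindow v N z) ≤ ∫⁻ t : ℝ, ENNReal.ofReal (v (z.re + t * I)) := by
  rw [ofReal_verticalWindow hcont hv0 hN]
  calc ∫⁻ s in Ioc (-N) N, ENNReal.ofReal (v (z + s * I))
      ≤ ∫⁻ s : ℝ, ENNReal.ofReal (v (z + s * I)) := setLIntegral_le_lintegral _ _
    _ = ∫⁻ s : ℝ, ENNReal.ofReal (v (z.re + (z.im + s : ℝ) * I)) := by
        congr! 4 with s
        nth_rw 1 [← re_add_im z]
        push_cast
        ring
    _ = ∫⁻ t : ℝ, ENNReal.ofReal (v (z.re + t * I)) :=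
        lintegral_add_left_eq_self (fun t : ℝ ↦ ENNReal.ofReal (v (z.re + t * I))) z.im

theorem lintegral_le_of_forall_ofReal_verticalWindow_le {z : ℂ}
    (hcont : Continuous fun s : ℝ ↦ v (z + s * I)) (hv0 : ∀ s : ℝ, 0 ≤ v (z + s * I))
    {C : ENNReal} (hC : ∀ n : ℕ, ENNReal.ofReal (verticalWindow v n z) ≤ C) :
    ∫⁻ s : ℝ, ENNReal.ofReal (v (z + s * I)) ≤ C := by
  have hcover : AECover volume atTop fun n : ℕ ↦ Ioc (-(n : ℝ)) n :=
    aecover_Ioc (tendsto_neg_atTop_atBot.comp tendsto_natCast_atTop_atTop)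
      tendsto_natCast_atTop_atTop
  refine le_of_tendsto' (hcover.lintegral_tendsto_of_countably_generated
    hcont.measurable.ennreal_ofReal.aemeasurable) fun n ↦ ?_
  exact (ofReal_verticalWindow hcont hv0 n.cast_nonneg).symm.trans_le (hC n)

end

theorem LogSubharmonicOn.lintegral_le_rpow_mul_rpow {v : ℂ → ℝ} {α β γ : ℝ} (hab : α < β)
    (hv : LogSubharmonicOn v (re ⁻¹' Ioo α β)) (hcont : ContinuousOn v (re ⁻¹' Icc α β))
    (hv0 : ∀ z ∈ re ⁻¹' Icc α β, 0 ≤ v z) (hbdd : BddAbove (v '' (re ⁻¹' Icc α β)))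
    (hγ : γ ∈ Icc α β) :
    ∫⁻ t : ℝ, ENNReal.ofReal (v (γ + t * I)) ≤
      (∫⁻ t : ℝ, ENNReal.ofReal (v (α + t * I))) ^ ((β - γ) / (β - α)) *
        (∫⁻ t : ℝ, ENNReal.ofReal (v (β + t * I))) ^ ((γ - α) / (β - α)) := by
  have hline {z : ℂ} (hz : z.re ∈ Icc α β) : Continuous fun s : ℝ ↦ v (z + s * I) :=
    continuous_vertical_line hcont hz
  have hline0 {z : ℂ} (hz : z.re ∈ Icc α β) (s : ℝ) : 0 ≤ v (z + s * I) :=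
    hv0 _ (by simpa using hz)
  have hwindow {n : ℕ} {z : ℂ} (hz : z.re ∈ Icc α β) :
      ENNReal.ofReal (verticalWindow v n z) ≤
        ∫⁻ t : ℝ, ENNReal.ofReal (v (z.re + t * I)) :=
    ofReal_verticalWindow_le_lintegral (hline hz) (hline0 hz) n.cast_nonneg
  refine lintegral_le_of_forall_ofReal_verticalWindow_le (hline hγ) (hline0 hγ) fun n ↦ ?_
  refine (logSubharmonicOn_verticalWindow hv n.cast_nonneg).ofReal_le_rpow_mul_rpow hab
    (continuousOn_verticalWindow hcont n) (bddAbove_image_verticalWindow hcont hbdd n.cast_nonneg)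
    (fun z hz ↦ ?_) (fun z hz ↦ ?_) hγ
  · simpa only [hz] using hwindow (z := z) (n := n) (by simp [hz, hab.le])
  · simpa only [hz] using hwindow (z := z) (n := n) (by simp [hz, hab.le])

theorem bddAbove_image_strip_of_forall_le_abs_im {v : ℂ → ℝ} {α β T M : ℝ}
    (hcont : ContinuousOn v (re ⁻¹' Icc α β))
    (hM : ∀ z : ℂ, z.re ∈ Icc α β → T ≤ |z.im| → v z ≤ M) :
    BddAbove (v '' (re ⁻¹' Icc α β)) := by
  have hbox : IsCompact (Icc α β ×ℂ Icc (-T) T) := isCompact_Icc.reProdIm isCompact_Icc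
  obtain ⟨C, hC⟩ := hbox.bddAbove_image (hcont.mono fun z hz ↦ hz.1)
  refine ⟨max C M, forall_mem_image.2 fun z hz ↦ ?_⟩
  rcases le_total T |z.im| with him | him
  · exact (hM z hz him).trans (le_max_right C M)
  · exact (hC (mem_image_of_mem v ⟨hz, abs_le.1 him⟩)).trans (le_max_left C M)

end

open MeasureTheory in
theorem gabriel_convexity_variant_general (α β b c : ℝ) (hab : α < β) (hb : 0 < b) (hc : 0 < c)
    (f g : ℂ → ℂ)
    (hf : DifferentiableOn ℂ f {z : ℂ | α < z.re ∧ z.re < β})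
    (hg : DifferentiableOn ℂ g {z : ℂ | α < z.re ∧ z.re < β})
    (hfc : ContinuousOn f {z : ℂ | α ≤ z.re ∧ z.re ≤ β})
    (hgc : ContinuousOn g {z : ℂ | α ≤ z.re ∧ z.re ≤ β})
    (hbdd : BddAbove ((fun z ↦ ‖f z‖ ^ b * ‖g z‖ ^ c) '' {z : ℂ | α ≤ z.re ∧ z.re ≤ β}))
    (I : ℝ → ENNReal)
    (hI : ∀ η : ℝ, I η = ∫⁻ t : ℝ,
      ENNReal.ofReal (‖f (η + t * Complex.I)‖ ^ b * ‖g (η + t * Complex.I)‖ ^ c))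
    (γ : ℝ) (hγ1 : α ≤ γ) (hγ2 : γ ≤ β) :
    I γ ≤ I α ^ ((β - γ) / (β - α)) * I β ^ ((γ - α) / (β - α)) := by
  have hopen : IsOpen (Complex.re ⁻¹' Set.Ioo α β) := isOpen_Ioo.preimage Complex.continuous_re
  have hlog : LogSubharmonicOn (fun z ↦ ‖f z‖ ^ b * ‖g z‖ ^ c) (Complex.re ⁻¹' Set.Ioo α β) :=
    logSubharmonicOn_norm_rpow_mul_norm_rpow hb hc (hf.analyticOnNhd hopen)
      (hg.analyticOnNhd hopen)
  have hcont := continuousOn_norm_rpow_mul_norm_rpow hb.le hc.le hfc hgc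
  simp only [hI]
  exact hlog.lintegral_le_rpow_mul_rpow hab hcont (fun z _ ↦ by positivity) hbdd ⟨hγ1, hγ2⟩

open MeasureTheory in
theorem gabriel_convexity_variant (α β b c : ℝ) (hab : α < β) (hb : 0 < b) (hc : 0 < c)
    (f g : ℂ → ℂ)
    (hf : DifferentiableOn ℂ f {z : ℂ | α < z.re ∧ z.re < β})
    (hg : DifferentiableOn ℂ g {z : ℂ | α < z.re ∧ z.re < β})
    (hfc : ContinuousOn f {z : ℂ | α ≤ z.re ∧ z.re ≤ β})
    (hgc : ContinuousOn g {z : ℂ | α ≤ z.re ∧ z.re ≤ β})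
    (hdecay : ∀ ε : ℝ, 0 < ε → ∃ T : ℝ, ∀ z : ℂ, α ≤ z.re → z.re ≤ β → T ≤ |z.im| →
      ‖f z‖ ^ b * ‖g z‖ ^ c < ε ∧ ‖g z‖ < ε)
    (I : ℝ → ENNReal)
    (hI : ∀ η : ℝ, I η = ∫⁻ t : ℝ,
      ENNReal.ofReal (‖f (η + t * Complex.I)‖ ^ b * ‖g (η + t * Complex.I)‖ ^ c))
    (γ : ℝ) (hγ1 : α ≤ γ) (hγ2 : γ ≤ β) :
    I γ ≤ I α ^ ((β - γ) / (β - α)) * I β ^ ((γ - α) / (β - α)) := by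
  obtain ⟨T, hT⟩ := hdecay 1 one_pos
  exact gabriel_convexity_variant_general α β b c hab hb hc f g hf hg hfc hgc
    (bddAbove_image_strip_of_forall_le_abs_im
      (continuousOn_norm_rpow_mul_norm_rpow hb.le hc.le hfc hgc)
      fun z hz him ↦ (hT z hz.1 hz.2 him).1.le) I hI γ hγ1 hγ2
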